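/- Let G be a simple graph. Then G admits an ERR:LD set if and only if every vertex of G has degree at least 2 and G is twin-free. Moreover, in that case S = V(G) is an ERR:LD set. -/

import Mathlib

open scoped symmDiff

variable {V : Type*}

/-- The closed neighborhood `N[v]` of a vertex. -/
def closedNbhd (G : SimpleGraph V) (v : V) : Set V := insert v (G.neighborSet v)

/-- `S` is an error-correcting locating-dominating (ERR:LD) set: conditions (i)-(iv). -/
def IsErrLD (G : SimpleGraph V) (S : Set V) : Prop :=
  (∀ v : V, 3 ≤ (closedNbhd G v ∩ S).encard) ∧
  (∀ v ∈ S, ∀ u ∈ S, u ≠ v →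
    1 ≤ ((((G.neighborSet v ∩ S) ∆ (G.neighborSet u ∩ S)) \ {v, u}).encard)) ∧
  (∀ v ∉ S, ∀ u ∈ S,
    2 ≤ ((((G.neighborSet v ∩ S) ∆ (G.neighborSet u ∩ S)) \ {u}).encard)) ∧
  (∀ v ∉ S, ∀ u ∉ S, u ≠ v →
    3 ≤ (((G.neighborSet v ∩ S) ∆ (G.neighborSet u ∩ S)).encard))

/-- `G` is twin-free: no two distinct vertices `u, v` satisfy `N(u) = N(v)` or
`N[u] = N[v]`. -/
def TwinFree (G : SimpleGraph V) : Prop :=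
  ∀ u v : V, u ≠ v →
    ¬(G.neighborSet u = G.neighborSet v ∨ closedNbhd G u = closedNbhd G v)

/-!
Two vertices `u ≠ v` are twins exactly when `N(u) ∆ N(v) ⊆ {u, v}`: adding `u, v` to both open
neighborhoods gives the closed ones if `u` and `v` are adjacent, and otherwise neither of them is in
either open neighborhood. So twin-freeness is condition (ii) for `S = V`, while any ERR:LD set `S`
yields a vertex of `S` outside `{u, v}` in `N(u) ∆ N(v)`.
-/

theorem sup_eq_sup_iff_symmDiff_le {α : Type*} [GeneralizedCoheytingAlgebra α] {a b c : α} :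
    a ⊔ c = b ⊔ c ↔ a ∆ b ≤ c :=
  sup_eq_sup_iff_right.trans symmDiff_le_iff.symm

theorem sdiff_nonempty_of_encard_lt_encard {α : Type*} {s t : Set α} (h : s.encard < t.encard) :
    (t \ s).Nonempty :=
  Set.sdiff_nonempty.2 fun h_subset => h.not_ge (Set.encard_le_encard h_subset)

theorem closedNbhd_eq_neighborSet_union_pair {G : SimpleGraph V} {u v : V} (huv : G.Adj u v) :
    closedNbhd G u = G.neighborSet u ∪ {u, v} := by
  have hv : v ∈ G.neighborSet u := huv
  rw [closedNbhd, Set.union_insert, Set.union_singleton, Set.insert_eq_of_mem hv]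

theorem encard_closedNbhd (G : SimpleGraph V) (v : V) :
    (closedNbhd G v).encard = (G.neighborSet v).encard + 1 :=
  Set.encard_insert_of_notMem G.notMem_neighborSet_self

theorem neighborSet_eq_or_closedNbhd_eq_iff_symmDiff_subset (G : SimpleGraph V) (u v : V) :
    G.neighborSet u = G.neighborSet v ∨ closedNbhd G u = closedNbhd G v ↔
      G.neighborSet u ∆ G.neighborSet v ⊆ {u, v} := by
  by_cases huv : G.Adj u v
  · have h_open : G.neighborSet u ≠ G.neighborSet v := fun h =>
      G.notMem_neighborSet_self (h.subset huv)
    rw [closedNbhd_eq_neighborSet_union_pair huv, closedNbhd_eq_neighborSet_union_pair huv.symm,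
      Set.pair_comm v u, or_iff_right h_open]
    exact sup_eq_sup_iff_symmDiff_le
  · have h_closed (h : closedNbhd G u = closedNbhd G v) : u = v := by
      have : u ∈ closedNbhd G v := h ▸ Set.mem_insert u _
      exact this.resolve_right fun hvu => huv hvu.symm
    have h_disj : Disjoint (G.neighborSet u ∆ G.neighborSet v) {u, v} := by
      simp [Set.mem_symmDiff, huv, G.adj_comm v u]
    refine ⟨?_, fun h => .inl <| symmDiff_eq_bot.1 <| h_disj.eq_bot_of_le h⟩
    rintro (h | h)
    · simp [h]
    · simp [h_closed h]

theorem twinFree_iff_symmDiff_sdiff_pair_nonempty (G : SimpleGraph V) :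
    TwinFree G ↔
      ∀ u v : V, u ≠ v → ((G.neighborSet u ∆ G.neighborSet v) \ {u, v}).Nonempty := by
  simp only [TwinFree, neighborSet_eq_or_closedNbhd_eq_iff_symmDiff_subset, Set.sdiff_nonempty]

namespace IsErrLD

variable {G : SimpleGraph V} {S : Set V}

theorem two_le_encard_neighborSet (hS : IsErrLD G S) (v : V) :
    2 ≤ (G.neighborSet v).encard := by
  have h_closed : 2 + 1 ≤ (G.neighborSet v).encard + 1 :=
    calc (2 + 1 : ℕ∞) = 3 := by norm_num
      _ ≤ (closedNbhd G v ∩ S).encard := hS.1 v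
      _ ≤ (closedNbhd G v).encard := Set.encard_le_encard Set.inter_subset_left
      _ = (G.neighborSet v).encard + 1 := encard_closedNbhd G v
  exact (ENat.add_le_add_iff_right ENat.one_ne_top).1 h_closed

/- The thresholds 1, 2, 3 in (ii)-(iv) grow exactly with the number of vertices of `{u, v}` that are
not yet deleted from the symmetric difference, so deleting those too always leaves a vertex. -/
theorem symmDiff_sdiff_pair_nonempty (hS : IsErrLD G S) {u v : V} (huv : u ≠ v) :
    (((G.neighborSet u ∩ S) ∆ (G.neighborSet v ∩ S)) \ {u, v}).Nonempty := by
  obtain ⟨-, h_both, h_one, h_none⟩ := hS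
  have h_mixed {x y : V} (hx : x ∈ S) (hy : y ∉ S) :
      (((G.neighborSet x ∩ S) ∆ (G.neighborSet y ∩ S)) \ {x, y}).Nonempty := by
    rw [symmDiff_comm, Set.insert_eq, ← Set.sdiff_sdiff]
    refine sdiff_nonempty_of_encard_lt_encard ?_
    rw [Set.encard_singleton]
    have h_lt : (1 : ℕ∞) < 2 := by norm_num
    exact h_lt.trans_le (h_one y hy x hx)
  by_cases hu : u ∈ S <;> by_cases hv : v ∈ S
  · exact Set.one_le_encard_iff_nonempty.1 (h_both u hu v hv huv.symm)
  · exact h_mixed hu hv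
  · rw [symmDiff_comm, Set.pair_comm]
    exact h_mixed hv hu
  · refine sdiff_nonempty_of_encard_lt_encard ?_
    rw [Set.encard_pair huv]
    have h_lt : (2 : ℕ∞) < 3 := by norm_num
    exact h_lt.trans_le (h_none u hu v hv huv.symm)

theorem twinFree (hS : IsErrLD G S) : TwinFree G := by
  refine (twinFree_iff_symmDiff_sdiff_pair_nonempty G).2 fun u v huv => ?_
  refine (hS.symmDiff_sdiff_pair_nonempty huv).mono (Set.sdiff_subset_sdiff_left ?_)
  rw [← Set.inter_symmDiff_distrib_right]
  exact Set.inter_subset_left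

end IsErrLD

theorem isErrLD_univ {G : SimpleGraph V} (h_deg : ∀ v : V, 2 ≤ (G.neighborSet v).encard)
    (h_twin : TwinFree G) : IsErrLD G Set.univ := by
  refine ⟨fun v => ?_, fun v _ u _ huv => ?_, fun v hv => absurd (Set.mem_univ v) hv,
    fun v hv => absurd (Set.mem_univ v) hv⟩
  · rw [Set.inter_univ, encard_closedNbhd, ← two_add_one_eq_three]
    gcongr
    exact h_deg v
  · rw [Set.inter_univ, Set.inter_univ, Set.one_le_encard_iff_nonempty]
    exact (twinFree_iff_symmDiff_sdiff_pair_nonempty G).1 h_twin v u huv.symm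

theorem errLD_exists_iff (G : SimpleGraph V) :
    ((∃ S : Set V, IsErrLD G S) ↔
      ((∀ v : V, 2 ≤ (G.neighborSet v).encard) ∧ TwinFree G)) ∧
    (((∀ v : V, 2 ≤ (G.neighborSet v).encard) ∧ TwinFree G) →
      IsErrLD G (Set.univ : Set V)) := by
  have h_univ (h : (∀ v : V, 2 ≤ (G.neighborSet v).encard) ∧ TwinFree G) :
      IsErrLD G Set.univ := isErrLD_univ h.1 h.2
  refine ⟨⟨?_, fun h => ⟨Set.univ, h_univ h⟩⟩, h_univ⟩
  rintro ⟨S, hS⟩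
  exact ⟨hS.two_le_encard_neighborSet, hS.twinFree⟩
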